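/- arXiv:1104.1231 — 2 statements merged into one kernel-verified Lean document; each statement's English description precedes it below -/
import Mathlib

section
/- A finitely generated group G admits a transitive translation-like action by ℤ if and only if G has a Cayley graph (with respect to some finite generating set) admitting a bi-infinite Hamiltonian path. -/
open scoped Pointwise

/-- A right action of a group `H` on a type `X`. -/
structure RightAction (H X : Type*) [Group H] where
  act : X → H → X
  act_one : ∀ x, act x 1 = x
  act_mul : ∀ x h k, act (act x h) k = act x (h * k)

/-- A right action is translation-like w.r.t. a distance function `d` if it is free and
every element moves points a uniformly bounded distance. -/
def RightAction.IsTranslationLike {H X : Type*} [Group H]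
    (a : RightAction H X) (d : X → X → ℝ) : Prop :=
  (∀ (x : X) (h : H), a.act x h = x → h = 1) ∧
  (∀ h : H, ∃ C : ℝ, ∀ x : X, d x (a.act x h) ≤ C)

/-- A right action is transitive if any point can be moved to any other point. -/
def RightAction.IsTransitive {H X : Type*} [Group H] (a : RightAction H X) : Prop :=
  ∀ x y : X, ∃ h : H, a.act x h = y

/-- `S` is a finite generating set of the group `G`. -/
def IsFinGenSet {G : Type*} [Group G] (S : Set G) : Prop :=
  S.Finite ∧ Subgroup.closure S = ⊤

/-- The left-invariant word-length distance associated to a generating set `S`: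
`wordDist S g h` is the least `n` with `g⁻¹ * h ∈ (S ∪ S⁻¹) ^ n`. -/
noncomputable def wordDist {G : Type*} [Group G] (S : Set G) (g h : G) : ℕ :=
  sInf {n : ℕ | g⁻¹ * h ∈ (S ∪ S⁻¹) ^ n}

/-- The word metric as a real-valued distance function. -/
noncomputable def wordMetric {G : Type*} [Group G] (S : Set G) : G → G → ℝ :=
  fun g h => (wordDist S g h : ℝ)

/-- The (right) Cayley graph of a group w.r.t. a set `S`: `g` and `gs` are adjacent
for `s ∈ S ∪ S⁻¹`. -/
def cayleyGraph {G : Type*} [Group G] (S : Set G) : SimpleGraph G :=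
  SimpleGraph.fromRel (fun g h => g⁻¹ * h ∈ S ∪ S⁻¹)

/-- A bi-infinite Hamiltonian path in a graph: a bijection `P : ℤ → V` with `P k`
adjacent to `P (k+1)` for all `k`. -/
def BiInfHamPath {V : Type*} (Γ : SimpleGraph V) : Prop :=
  ∃ P : ℤ → V, Function.Bijective P ∧ ∀ k : ℤ, Γ.Adj (P k) (P (k + 1))

/-!
Fixing a base point identifies free transitive actions of `ℤ` on `G` with bijections `ℤ → G`: the
action of `1` moves each point one step along the enumeration. The only metric input is that balls
of a word metric are finite, so an element `h` of the acting group moves points a bounded distance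
if and only if the displacements from `x` to its image under `h` form a finite subset of `G`, a
condition that mentions no generating set.
Adjoining the displacements of `1 ∈ ℤ` to a finite generating set turns the orbit enumeration into a
Hamiltonian path. Conversely, the steps of a Hamiltonian path lie in `S ∪ S⁻¹`, so `1` has finitely
many displacements, and the elements with this property form a subgroup.
-/

namespace RightAction

section Free

variable {H X : Type*} [Group H]

/-- A right action is free if only the identity has a fixed point. -/
def IsFree (a : RightAction H X) : Prop :=
  ∀ (x : X) (h : H), a.act x h = x → h = 1

theorem IsFree.act_injective {a : RightAction H X} (ha : a.IsFree) (x : X) :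
    Function.Injective (a.act x) := by
  intro h k hk
  refine inv_mul_eq_one.1 (ha (a.act x h) (h⁻¹ * k) ?_)
  rw [a.act_mul, mul_inv_cancel_left, hk]

/-- The right regular action of `H`, transported to `X` along a bijection `H ≃ X`. It makes an
enumeration of `G` by `ℤ` into a free transitive action. -/
def ofEquiv (e : H ≃ X) : RightAction H X where
  act x h := e (e.symm x * h)
  act_one x := by rw [mul_one, e.apply_symm_apply]
  act_mul x h k := by rw [e.symm_apply_apply, mul_assoc]

theorem ofEquiv_act_apply (e : H ≃ X) (k h : H) : (ofEquiv e).act (e k) h = e (k * h) := by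
  simp only [ofEquiv, e.symm_apply_apply]

theorem isFree_ofEquiv (e : H ≃ X) : (ofEquiv e).IsFree := by
  intro x h hx
  obtain ⟨k, rfl⟩ := e.surjective x
  rwa [ofEquiv_act_apply, e.apply_eq_iff_eq, mul_eq_left] at hx

theorem isTransitive_ofEquiv (e : H ≃ X) : (ofEquiv e).IsTransitive := by
  intro x y
  obtain ⟨k, rfl⟩ := e.surjective x
  obtain ⟨l, rfl⟩ := e.surjective y
  exact ⟨k⁻¹ * l, by rw [ofEquiv_act_apply, mul_inv_cancel_left]⟩

end Free

section Displacement

variable {H G : Type*} [Group H] [Group G] (a : RightAction H G)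

/-- The elements of `G` by which the action of `h` moves points, recorded as right multipliers so
that they are the steps of the Cayley graph and are compatible with the left-invariant metric. -/
def displacements (h : H) : Set G :=
  Set.range fun x => x⁻¹ * a.act x h

theorem displacements_one : a.displacements 1 = 1 := by
  simp only [displacements, a.act_one, inv_mul_cancel, Set.range_const, Set.singleton_one]

theorem displacements_mul_subset (h k : H) :
    a.displacements (h * k) ⊆ a.displacements h * a.displacements k := by
  rintro _ ⟨x, rfl⟩
  refine ⟨_, ⟨x, rfl⟩, _, ⟨a.act x h, rfl⟩, ?_⟩
  simp only [mul_assoc, mul_inv_cancel_left, a.act_mul]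

theorem displacements_inv_subset (h : H) : a.displacements h⁻¹ ⊆ (a.displacements h)⁻¹ := by
  rintro _ ⟨x, rfl⟩
  refine ⟨a.act x h⁻¹, ?_⟩
  simp only [a.act_mul, inv_mul_cancel, a.act_one, mul_inv_rev, inv_inv]

/-- The subgroup of elements with finitely many displacements. For a finitely generated `G` these
are the elements that move points a bounded distance in the word metric. -/
def finiteDisplacementSubgroup : Subgroup H where
  carrier := {h | (a.displacements h).Finite}
  one_mem' := Set.finite_one.subset a.displacements_one.subset
  mul_mem' {h k} hh hk := (hh.mul hk).subset (a.displacements_mul_subset h k)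
  inv_mem' {h} hh := hh.inv.subset (a.displacements_inv_subset h)

theorem finite_displacements_of_ofAdd_one {a : RightAction (Multiplicative ℤ) G}
    (ha : (a.displacements (Multiplicative.ofAdd 1)).Finite) (h : Multiplicative ℤ) :
    (a.displacements h).Finite := by
  have hpow : Multiplicative.ofAdd 1 ^ h.toAdd = h := by
    rw [← Int.ofAdd_mul, one_mul, ofAdd_toAdd]
  exact hpow ▸ a.finiteDisplacementSubgroup.zpow_mem ha h.toAdd

end Displacement

end RightAction

section PointwisePowers

variable {M : Type*} [Monoid M] {s : Set M}

theorem finite_pow_of_finite (hs : s.Finite) (n : ℕ) : (s ^ n).Finite := by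
  induction n with
  | zero => exact pow_zero s ▸ Set.finite_one
  | succ n ih => exact pow_succ s n ▸ ih.mul hs

theorem exists_mem_pow_of_mem_closure {x : M} (hx : x ∈ Submonoid.closure s) :
    ∃ n : ℕ, x ∈ s ^ n := by
  induction hx using Submonoid.closure_induction with
  | mem x hx => exact ⟨1, (pow_one s).symm ▸ hx⟩
  | one => exact ⟨0, (pow_zero s).symm ▸ Set.one_mem_one⟩
  | mul x y _ _ hx hy =>
    obtain ⟨m, hm⟩ := hx
    obtain ⟨n, hn⟩ := hy
    exact ⟨m + n, pow_add s m n ▸ Set.mul_mem_mul hm hn⟩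

end PointwisePowers

section WordMetric

variable {G : Type*} [Group G] {S : Set G}

theorem wordDist_one_inv_mul (S : Set G) (g h : G) :
    wordDist S 1 (g⁻¹ * h) = wordDist S g h := by
  simp only [wordDist, inv_one, one_mul]

theorem mem_pow_wordDist (hS : Subgroup.closure S = ⊤) (g h : G) :
    g⁻¹ * h ∈ (S ∪ S⁻¹) ^ wordDist S g h := by
  have hgh : g⁻¹ * h ∈ Submonoid.closure (S ∪ S⁻¹) := by
    rw [← Subgroup.closure_toSubmonoid, hS]
    exact Subgroup.mem_top _
  have hne : {n : ℕ | g⁻¹ * h ∈ (S ∪ S⁻¹) ^ n}.Nonempty := exists_mem_pow_of_mem_closure hgh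
  exact Nat.sInf_mem hne

theorem IsFinGenSet.finite_setOf_wordDist_one_le (hS : IsFinGenSet S) (n : ℕ) :
    {g : G | wordDist S 1 g ≤ n}.Finite := by
  have hpow : (⋃ k ∈ Set.Iic n, (S ∪ S⁻¹) ^ k).Finite :=
    (Set.finite_Iic n).biUnion fun k _ => finite_pow_of_finite (hS.1.union hS.1.inv) k
  refine hpow.subset fun g hg => Set.mem_biUnion hg ?_
  simpa only [inv_one, one_mul] using mem_pow_wordDist hS.2 1 g

theorem IsFinGenSet.exists_wordMetric_le_iff (hS : IsFinGenSet S) (f : G → G) :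
    (∃ C : ℝ, ∀ x, wordMetric S x (f x) ≤ C) ↔ (Set.range fun x => x⁻¹ * f x).Finite := by
  constructor
  · rintro ⟨C, hC⟩
    refine (hS.finite_setOf_wordDist_one_le ⌊C⌋₊).subset ?_
    rintro _ ⟨x, rfl⟩
    exact (wordDist_one_inv_mul S x (f x)).trans_le (Nat.le_floor (hC x))
  · intro hf
    obtain ⟨C, hC⟩ := (hf.image (wordMetric S 1)).bddAbove
    refine ⟨C, fun x => ?_⟩
    calc
      wordMetric S x (f x) = wordMetric S 1 (x⁻¹ * f x) :=
        congrArg Nat.cast (wordDist_one_inv_mul S x (f x)).symm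
      _ ≤ C := hC (Set.mem_image_of_mem _ (Set.mem_range_self x))

theorem IsFinGenSet.isTranslationLike_iff (hS : IsFinGenSet S) {H : Type*} [Group H]
    (a : RightAction H G) :
    a.IsTranslationLike (wordMetric S) ↔ a.IsFree ∧ ∀ h, (a.displacements h).Finite :=
  and_congr_right' (forall_congr' fun h => hS.exists_wordMetric_le_iff (a.act · h))

theorem IsFinGenSet.union_finite (hS : IsFinGenSet S) {T : Set G} (hT : T.Finite) :
    IsFinGenSet (S ∪ T) :=
  ⟨hS.1.union hT, top_le_iff.1 (hS.2 ▸ Subgroup.closure_mono Set.subset_union_left)⟩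

end WordMetric

section HamiltonianPath

variable {G : Type*} [Group G] {S : Set G}

theorem cayleyGraph_adj {g h : G} :
    (cayleyGraph S).Adj g h ↔ g ≠ h ∧ g⁻¹ * h ∈ S ∪ S⁻¹ := by
  have hsymm : h⁻¹ * g ∈ S ∪ S⁻¹ ↔ g⁻¹ * h ∈ S ∪ S⁻¹ := by
    rw [← Set.inv_mem_inv, Set.union_inv, inv_inv, Set.union_comm, mul_inv_rev, inv_inv]
  rw [cayleyGraph, SimpleGraph.fromRel_adj, hsymm, or_self]

theorem RightAction.IsFree.cayleyGraph_adj_act {H : Type*} [Group H] {a : RightAction H G}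
    (hfree : a.IsFree) {h : H} (hh : h ≠ 1) (hS : a.displacements h ⊆ S) (x : G) :
    (cayleyGraph S).Adj x (a.act x h) :=
  cayleyGraph_adj.2 ⟨fun hx => hh (hfree x h hx.symm), Or.inl (hS ⟨x, rfl⟩)⟩

theorem RightAction.IsFree.biInfHamPath_cayleyGraph {a : RightAction (Multiplicative ℤ) G}
    (hfree : a.IsFree) (htrans : a.IsTransitive)
    (hS : a.displacements (.ofAdd 1) ⊆ S) : BiInfHamPath (cayleyGraph S) := by
  have horbit : Function.Bijective (a.act 1) := ⟨hfree.act_injective 1, htrans 1⟩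
  refine ⟨fun k => a.act 1 (.ofAdd k), horbit.comp Multiplicative.ofAdd.bijective, fun k => ?_⟩
  have hone : Multiplicative.ofAdd (1 : ℤ) ≠ 1 := ofAdd_eq_one.not.2 one_ne_zero
  have hstep := hfree.cayleyGraph_adj_act hone hS (a.act 1 (.ofAdd k))
  rwa [a.act_mul, ← ofAdd_add] at hstep

theorem RightAction.displacements_ofEquiv_subset {H : Type*} [Group H] {e : H ≃ G} {h : H}
    (he : ∀ k, (cayleyGraph S).Adj (e k) (e (k * h))) :
    (ofEquiv e).displacements h ⊆ S ∪ S⁻¹ := by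
  rintro _ ⟨x, rfl⟩
  obtain ⟨k, rfl⟩ := e.surjective x
  simp only [ofEquiv_act_apply]
  exact (cayleyGraph_adj.1 (he k)).2

end HamiltonianPath

/-- A finitely generated group admits a transitive translation-like action by `ℤ` if and
only if it has a Cayley graph admitting a bi-infinite Hamiltonian path. -/
theorem transitive_Z_action_iff_cayley_biinf_ham
    (G : Type*) [Group G] [Group.FG G] :
    (∃ a : RightAction (Multiplicative ℤ) G, a.IsTransitive ∧
       ∀ S : Set G, IsFinGenSet S → a.IsTranslationLike (wordMetric S)) ↔
    (∃ S : Set G, IsFinGenSet S ∧ BiInfHamPath (cayleyGraph S)) := by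
  constructor
  · rintro ⟨a, htrans, htl⟩
    obtain ⟨S, hgen, hfin⟩ := Group.fg_iff.1 ‹Group.FG G›
    have hS : IsFinGenSet S := ⟨hfin, hgen⟩
    obtain ⟨hfree, hdisp⟩ := (hS.isTranslationLike_iff a).1 (htl S hS)
    exact ⟨S ∪ a.displacements (.ofAdd 1), hS.union_finite (hdisp _),
      hfree.biInfHamPath_cayleyGraph htrans Set.subset_union_right⟩
  · rintro ⟨S, ⟨hfin, -⟩, P, hP, hadj⟩
    let e : Multiplicative ℤ ≃ G := Multiplicative.toAdd.trans (Equiv.ofBijective P hP)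
    have hdisp : ((RightAction.ofEquiv e).displacements (.ofAdd 1)).Finite :=
      (hfin.union hfin.inv).subset (RightAction.displacements_ofEquiv_subset fun k => hadj k.toAdd)
    exact ⟨.ofEquiv e, RightAction.isTransitive_ofEquiv e, fun T hT =>
      (hT.isTranslationLike_iff _).2 ⟨RightAction.isFree_ofEquiv e,
        RightAction.finite_displacements_of_ofAdd_one hdisp⟩⟩
end

section
/- Let Γ be a connected infinite graph whose vertices have uniformly bounded degree. Then Γ admits a transitive translation-like action by ℤ if and only if Γ has at most two ends. -/
open scoped Pointwise

/-- The path-length distance on the vertices of a graph, as a real-valued function. -/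
noncomputable def graphDist {V : Type*} (Γ : SimpleGraph V) : V → V → ℝ :=
  fun u v => (Γ.dist u v : ℝ)

/-- The graph `Γ` has at most `m` ends: for every finite set `A` of edges, the graph
`Γ − A` has at most `m` infinite connected components. -/
def graphEndsLE {V : Type*} (Γ : SimpleGraph V) (m : ℕ) : Prop :=
  ∀ A : Finset (Sym2 V),
    {c : (Γ.deleteEdges (A : Set (Sym2 V))).ConnectedComponent | c.supp.Infinite}.encard ≤ m

/-!
A transitive translation-like action of `ℤ` amounts to a bijection `ℤ ≃ V` with bounded distances
between consecutive values. After deleting finitely many edges, all but finitely many consecutive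
values are still joined, since balls are finite; hence an infinite component contains one of the two
tails of the line, and there are at most two ends.

Conversely, a finite connected set has a Hamiltonian `3`-path from any vertex `p` to within
distance `1` of any vertex `s`: split off one component of the complement of `p` and recurse on both
parts. A one-ended set is exhausted by such paths. Traverse a finite connected piece whose removal
leaves a one-ended set, finish next to that remainder, and repeat. This lists the one-ended set as a
ray. If the graph itself is one-ended, the even and the odd positions of its ray are two rays, which
glue to a line. Otherwise a finite set of edges splits the graph into two infinite connected halves.
Having at most two ends makes both halves one-ended, and their rays glue to a line.
-/

section Components

variable {V : Type*} {G : SimpleGraph V}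

/-- The connected component of `z` in the subgraph of `G` induced on `Z`, as a set of vertices of
`G`. It is empty when `z ∉ Z`. -/
def componentIn (G : SimpleGraph V) (Z : Set V) (z : V) : Set V :=
  {x | ∃ w : G.Walk z x, ∀ u ∈ w.support, u ∈ Z}

theorem componentIn_subset (Z : Set V) (z : V) : componentIn G Z z ⊆ Z :=
  fun _ ⟨w, hw⟩ => hw _ w.end_mem_support

theorem mem_componentIn_self {Z : Set V} {z : V} (hz : z ∈ Z) : z ∈ componentIn G Z z :=
  ⟨.nil, by simpa using hz⟩

theorem mem_componentIn_comm {Z : Set V} {x z : V} :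
    x ∈ componentIn G Z z ↔ z ∈ componentIn G Z x := by
  constructor <;> exact fun ⟨w, hw⟩ => ⟨w.reverse, by simpa using hw⟩

theorem mem_componentIn_trans {Z : Set V} {x y z : V} (hxy : y ∈ componentIn G Z x)
    (hyz : z ∈ componentIn G Z y) : z ∈ componentIn G Z x := by
  obtain ⟨v, hv⟩ := hxy
  obtain ⟨w, hw⟩ := hyz
  exact ⟨v.append w, fun u hu => (v.mem_support_append_iff w).1 hu |>.elim (hv u) (hw u)⟩

theorem mem_componentIn_of_adj {Z : Set V} {x y z : V} (hx : x ∈ componentIn G Z z)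
    (hy : y ∈ Z) (hxy : G.Adj x y) : y ∈ componentIn G Z z :=
  mem_componentIn_trans hx ⟨hxy.toWalk, by
    simpa using ⟨componentIn_subset Z z hx, hy⟩⟩

theorem connected_induce_componentIn {Z : Set V} {z : V} (hz : z ∈ Z) :
    (G.induce (componentIn G Z z)).Connected := by
  classical
  refine G.induce_connected_of_patches z (mem_componentIn_self hz) ?_
  rintro x ⟨w, hw⟩
  refine ⟨{u | u ∈ w.support}, fun u hu => ?_, w.start_mem_support, w.end_mem_support,
    w.connected_induce_support _ _⟩
  exact ⟨w.takeUntil u hu, fun v hv => hw v (w.support_takeUntil_subset_support hu hv)⟩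

theorem exists_finite_connected_subset {W : Set V} (hW : (G.induce W).Connected) {x y : V}
    (hx : x ∈ W) (hy : y ∈ W) :
    ∃ F ⊆ W, F.Finite ∧ x ∈ F ∧ y ∈ F ∧ (G.induce F).Connected := by
  obtain ⟨w⟩ := hW.preconnected ⟨x, hx⟩ ⟨y, hy⟩
  let w' := w.map (SimpleGraph.Embedding.induce W).toHom
  refine ⟨{u | u ∈ w'.support}, fun u hu => ?_, w'.support.finite_toSet, w'.start_mem_support,
    w'.end_mem_support, w'.connected_induce_support⟩
  obtain ⟨v, -, rfl⟩ := List.mem_map.1 (w.support_map _ ▸ hu)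
  exact v.2

theorem exists_adj_mem_notMem {W T : Set V} (hW : (G.induce W).Connected) {x y : V}
    (hx : x ∈ W) (hxT : x ∈ T) (hy : y ∈ W) (hyT : y ∉ T) :
    ∃ a ∈ W, a ∈ T ∧ ∃ b ∈ W, b ∉ T ∧ G.Adj a b := by
  obtain ⟨w⟩ := hW.preconnected ⟨x, hx⟩ ⟨y, hy⟩
  obtain ⟨d, -, hfst, hsnd⟩ := w.exists_boundary_dart (Subtype.val ⁻¹' T) hxT hyT
  exact ⟨d.fst, d.fst.2, hfst, d.snd, d.snd.2, hsnd, d.adj⟩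

theorem connected_induce_univ : (G.induce Set.univ).Connected ↔ G.Connected :=
  (SimpleGraph.induceUnivIso G).connected_iff

theorem exists_adj_componentIn_sdiff {W F : Set V} (hW : (G.induce W).Connected) (hFW : F ⊆ W)
    (hF : F.Nonempty) {x : V} (hx : x ∈ W \ F) :
    ∃ f ∈ F, ∃ k ∈ componentIn G (W \ F) x, G.Adj f k := by
  obtain ⟨f, hf⟩ := hF
  obtain ⟨k, -, hk, b, hbW, hb, hkb⟩ := exists_adj_mem_notMem hW hx.1 (mem_componentIn_self hx)
    (hFW hf) fun h => (componentIn_subset _ _ h).2 hf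
  refine ⟨b, ?_, k, hk, hkb.symm⟩
  by_contra hbF
  exact hb (mem_componentIn_of_adj hk ⟨hbW, hbF⟩ hkb)

theorem connected_induce_sdiff_componentIn {W F : Set V} (hW : (G.induce W).Connected)
    (hFW : F ⊆ W) (hF : (G.induce F).Connected) (x : V) :
    (G.induce (W \ componentIn G (W \ F) x)).Connected := by
  have hF_sub : F ⊆ W \ componentIn G (W \ F) x := fun y hy =>
    ⟨hFW hy, fun h => (componentIn_subset _ _ h).2 hy⟩
  obtain ⟨⟨f, hf⟩⟩ := hF.nonempty
  refine G.induce_connected_of_patches f (hF_sub hf) fun {y} hy => ?_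
  by_cases hyF : y ∈ F
  · exact ⟨F, hF_sub, hf, hyF, hF.preconnected _ _⟩
  have hyWF : y ∈ W \ F := ⟨hy.1, hyF⟩
  obtain ⟨a, ha, k, hk, hak⟩ := exists_adj_componentIn_sdiff hW hFW ⟨f, hf⟩ hyWF
  refine ⟨F ∪ componentIn G (W \ F) y, Set.union_subset hF_sub fun z hz => ?_, .inl hf,
    .inr (mem_componentIn_self hyWF), SimpleGraph.connected_induce_union hF.preconnected
      (connected_induce_componentIn hyWF).preconnected ha hk hak _ _⟩
  exact ⟨(componentIn_subset _ _ hz).1,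
    fun hzx => hy.2 (mem_componentIn_trans hzx (mem_componentIn_comm.1 hz))⟩

end Components

section EdgeBoundary

variable {V : Type*} {G : SimpleGraph V}

/-- The edges of `G` with exactly one endpoint in `X`. -/
def edgeBoundary (G : SimpleGraph V) (X : Set V) : Set (Sym2 V) :=
  {e | ∃ x ∈ X, ∃ y ∉ X, G.Adj x y ∧ s(x, y) = e}

theorem edgeBoundary_univ : edgeBoundary G Set.univ = ∅ := by
  simp [edgeBoundary]

theorem edgeBoundary_compl (X : Set V) : edgeBoundary G Xᶜ = edgeBoundary G X := by
  ext e
  constructor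
  · rintro ⟨x, hx, y, hy, hxy, rfl⟩
    exact ⟨y, not_not.1 hy, x, hx, hxy.symm, Sym2.eq_swap⟩
  · rintro ⟨x, hx, y, hy, hxy, rfl⟩
    exact ⟨y, hy, x, not_not.2 hx, hxy.symm, Sym2.eq_swap⟩

theorem edgeBoundary_sdiff_subset (X Y : Set V) :
    edgeBoundary G (X \ Y) ⊆ edgeBoundary G X ∪ edgeBoundary G Y := by
  rintro _ ⟨x, ⟨hxX, hxY⟩, y, hy, hxy, rfl⟩
  by_cases hyX : y ∈ X
  · exact .inr ⟨y, by_contra fun hyY => hy ⟨hyX, hyY⟩, x, hxY, hxy.symm, Sym2.eq_swap⟩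
  · exact .inl ⟨x, hxX, y, hyX, hxy, rfl⟩

theorem edgeBoundary_componentIn_subset (Z : Set V) (z : V) :
    edgeBoundary G (componentIn G Z z) ⊆ edgeBoundary G Z := by
  rintro _ ⟨x, hx, y, hy, hxy, rfl⟩
  exact ⟨x, componentIn_subset Z z hx, y, fun hyZ => hy (mem_componentIn_of_adj hx hyZ hxy), hxy,
    rfl⟩

theorem finite_edgeBoundary_of_finite (hlf : ∀ v, (G.neighborSet v).Finite) {F : Set V}
    (hF : F.Finite) : (edgeBoundary G F).Finite := by
  refine (hF.biUnion fun x _ => (hlf x).image fun y => s(x, y)).subset ?_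
  rintro _ ⟨x, hx, y, -, hxy, rfl⟩
  exact Set.mem_biUnion hx ⟨y, hxy, rfl⟩

theorem finite_setOf_exists_mem_sym2 {α : Type*} {A : Set (Sym2 α)} (hA : A.Finite) :
    {x | ∃ e ∈ A, x ∈ e}.Finite := by
  classical
  refine (hA.biUnion fun e _ => e.toFinset.finite_toSet).subset ?_
  rintro x ⟨e, he, hxe⟩
  exact Set.mem_biUnion he (Sym2.mem_toFinset.2 hxe)

theorem exists_infinite_componentIn (hG : G.Connected) {Z : Set V} (hZ : Z.Infinite)
    (hb : (edgeBoundary G Z).Finite) : ∃ z ∈ Z, (componentIn G Z z).Infinite := by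
  by_contra! hfin
  obtain ⟨o, ho⟩ := hZ.nonempty
  let B : Set V := {x | ∃ e ∈ edgeBoundary G Z, x ∈ e} ∩ Z
  have hB : (insert o B).Finite := ((finite_setOf_exists_mem_sym2 hb).inter_of_left Z).insert o
  have hBZ : insert o B ⊆ Z := Set.insert_subset ho Set.inter_subset_right
  refine hZ ((hB.biUnion fun x hx => hfin x (hBZ hx)).subset fun z hz => ?_)
  suffices ∃ x ∈ insert o B, x ∈ componentIn G Z z by
    obtain ⟨x, hx, hxz⟩ := this
    exact Set.mem_biUnion hx (mem_componentIn_comm.1 hxz)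
  by_cases hoz : o ∈ componentIn G Z z
  · exact ⟨o, Set.mem_insert o B, hoz⟩
  obtain ⟨a, -, ha, b, -, hb, hab⟩ := exists_adj_mem_notMem (connected_induce_univ.2 hG)
    (Set.mem_univ z) (mem_componentIn_self hz) (Set.mem_univ o) hoz
  exact ⟨a, .inr ⟨⟨s(a, b), edgeBoundary_componentIn_subset Z z ⟨a, ha, b, hb, hab, rfl⟩,
    Sym2.mem_mk_left a b⟩, componentIn_subset Z z ha⟩, ha⟩

end EdgeBoundary

section ThreePaths

variable {V : Type*} {G : SimpleGraph V}

/-- `l` is a Hamiltonian `3`-path on `S`: it lists every vertex of `S` exactly once, and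
consecutive entries are at distance at most `3` in `G`, where the distance is that of the whole
graph and not of the subgraph induced on `S`. -/
structure IsHamiltonianThreePath (G : SimpleGraph V) (S : Set V) (l : List V) : Prop where
  nodup : l.Nodup
  mem_iff : ∀ x, x ∈ l ↔ x ∈ S
  isChain : l.IsChain fun x y => G.edist x y ≤ 3

namespace IsHamiltonianThreePath

theorem singleton (p : V) : IsHamiltonianThreePath G {p} [p] :=
  ⟨List.nodup_singleton p, by simp, .singleton p⟩

theorem reverse {S : Set V} {l : List V} (h : IsHamiltonianThreePath G S l) :
    IsHamiltonianThreePath G S l.reverse where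
  nodup := List.nodup_reverse.2 h.nodup
  mem_iff := by simpa using h.mem_iff
  isChain := List.isChain_reverse.2 (by simpa only [G.edist_comm] using h.isChain)

theorem append {S T : Set V} {l m : List V} (hl : IsHamiltonianThreePath G S l)
    (hm : IsHamiltonianThreePath G T m) (hST : Disjoint S T)
    (hlm : ∀ x ∈ l.getLast?, ∀ y ∈ m.head?, G.edist x y ≤ 3) :
    IsHamiltonianThreePath G (S ∪ T) (l ++ m) where
  nodup := hl.nodup.append hm.nodup fun x hxl hxm =>
    Set.disjoint_left.1 hST ((hl.mem_iff x).1 hxl) ((hm.mem_iff x).1 hxm)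
  mem_iff x := by simp only [List.mem_append, hl.mem_iff, hm.mem_iff, Set.mem_union]
  isChain := List.isChain_append.2 ⟨hl.isChain, hm.isChain, hlm⟩

end IsHamiltonianThreePath

theorem exists_connected_partition {S : Set V} (hS : (G.induce S).Connected) {p s : V}
    (hp : p ∈ S) (hs : s ∈ S) (hSp : S ≠ {p}) :
    ∃ T K, T ∪ K = S ∧ Disjoint T K ∧ p ∈ T ∧ (s ≠ p → s ∈ K) ∧ (G.induce T).Connected ∧
      (G.induce K).Connected ∧ ∃ k ∈ K, G.Adj p k := by
  obtain ⟨x, hx, hsx⟩ : ∃ x ∈ S \ {p}, s ≠ p → x = s := by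
    by_cases hsp : s = p
    · obtain ⟨x, hx⟩ := ((Set.nontrivial_iff_ne_singleton hp).2 hSp).exists_ne p
      exact ⟨x, hx, fun h => absurd hsp h⟩
    · exact ⟨s, ⟨hs, hsp⟩, fun _ => rfl⟩
  have hpS : {p} ⊆ S := Set.singleton_subset_iff.2 hp
  have hK : componentIn G (S \ {p}) x ⊆ S \ {p} := componentIn_subset _ _
  obtain ⟨q, hqp, k, hk, hqk⟩ :=
    exists_adj_componentIn_sdiff hS hpS (Set.singleton_nonempty p) hx
  exact ⟨S \ componentIn G (S \ {p}) x, componentIn G (S \ {p}) x,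
    Set.sdiff_union_of_subset (hK.trans Set.sdiff_subset), Set.disjoint_sdiff_left,
    ⟨hp, fun h => (hK h).2 rfl⟩, fun h => hsx h ▸ mem_componentIn_self hx,
    connected_induce_sdiff_componentIn hS hpS .of_subsingleton x,
    connected_induce_componentIn hx, k, hk, hqp ▸ hqk⟩

theorem edist_le_three_of_le_one {t u v w : V} (htu : G.edist t u ≤ 1) (huv : G.edist u v ≤ 1)
    (hvw : G.edist v w ≤ 1) : G.edist t w ≤ 3 :=
  calc G.edist t w ≤ G.edist t u + G.edist u w := G.edist_triangle
    _ ≤ G.edist t u + (G.edist u v + G.edist v w) := by gcongr; exact G.edist_triangle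
    _ ≤ 1 + (1 + 1) := by gcongr
    _ = 3 := by norm_num

theorem exists_isHamiltonianThreePath {S : Set V} (hfin : S.Finite)
    (hS : (G.induce S).Connected) {p s : V} (hp : p ∈ S) (hs : s ∈ S) :
    ∃ l, IsHamiltonianThreePath G S l ∧ p ∈ l.head? ∧ ∃ t ∈ l.getLast?, G.edist t s ≤ 1 := by
  induction hn : S.ncard using Nat.strong_induction_on generalizing S p s with
  | h n ih =>
  subst hn
  by_cases hSp : S = {p}
  · subst hSp
    obtain rfl : s = p := hs
    exact ⟨[s], .singleton s, rfl, s, rfl, by simp⟩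
  obtain ⟨T, K, rfl, hTK, hpT, hsK, hT, hK, k, hk, hpk⟩ := exists_connected_partition hS hp hs hSp
  have hpk1 : G.edist p k ≤ 1 := (SimpleGraph.edist_eq_one_iff_adj.2 hpk).le
  have hTlt : T.ncard < (T ∪ K).ncard := Set.ncard_lt_ncard
    (Set.ssubset_iff_exists.2 ⟨Set.subset_union_left, k, .inr hk, Set.disjoint_right.1 hTK hk⟩) hfin
  have hKlt : K.ncard < (T ∪ K).ncard := Set.ncard_lt_ncard
    (Set.ssubset_iff_exists.2 ⟨Set.subset_union_right, p, hp, Set.disjoint_left.1 hTK hpT⟩) hfin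
  have ihK {s' : V} (hs' : s' ∈ K) := ih _ hKlt (hfin.subset Set.subset_union_right) hK hk hs' rfl
  obtain ⟨l, hl, hlp, a, hla, hap⟩ :=
    ih _ hTlt (hfin.subset Set.subset_union_left) hT hpT hpT rfl
  obtain ⟨m, hm, ⟨b, hmb, hkb⟩, t, hmt, hts⟩ : ∃ m, IsHamiltonianThreePath G K m ∧
      (∃ b ∈ m.head?, G.edist k b ≤ 1) ∧ ∃ t ∈ m.getLast?, G.edist t s ≤ 1 := by
    by_cases hsp : s = p
    · obtain ⟨m, hm, hmk, b, hmb, hbk⟩ := ihK hk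
      exact ⟨m.reverse, hm.reverse, ⟨b, by rwa [List.head?_reverse], by rwa [G.edist_comm]⟩,
        k, by rwa [List.getLast?_reverse], by rwa [hsp, G.edist_comm]⟩
    · obtain ⟨m, hm, hmk, hmt⟩ := ihK (hsK hsp)
      exact ⟨m, hm, ⟨k, hmk, by simp⟩, hmt⟩
  refine ⟨l ++ m, hl.append hm hTK fun c hc d hd => ?_,
    List.mem_head?_append_of_mem_head? hlp, t, List.mem_getLast?_append_of_mem_getLast? hmt, hts⟩
  obtain rfl := Option.mem_unique hc hla
  obtain rfl := Option.mem_unique hd hmb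
  exact edist_le_three_of_le_one hap hpk1 hkb

end ThreePaths

section ListLimits

variable {α : Type*}

theorem exists_forall_getElem_eq {L : ℕ → List α} (hpre : ∀ n, L n <+: L (n + 1))
    (hlen : ∀ n, n < (L (n + 1)).length) :
    ∃ f : ℕ → α, ∀ m n (h : n < (L m).length), (L m)[n] = f n := by
  have hpre_le {m n : ℕ} (hmn : m ≤ n) : L m <+: L n := by
    induction n, hmn using Nat.le_induction with
    | base => exact List.prefix_rfl
    | succ n _ ih => exact ih.trans (hpre n)
  refine ⟨fun n => (L (n + 1))[n]'(hlen n), fun m n h => ?_⟩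
  rcases le_total m (n + 1) with hmn | hmn
  · exact (hpre_le hmn).getElem h
  · exact ((hpre_le hmn).getElem (hlen n)).symm

theorem exists_prefix_chain_of_extension {C : Set α} (hC : C.Countable) (hne : C.Nonempty)
    {P : List α → Prop} (hP : ∃ L, P L)
    (hext : ∀ L, P L → ∀ v ∈ C, ∃ L', P L' ∧ L <+: L' ∧ L.length < L'.length ∧ v ∈ L') :
    ∃ L : ℕ → List α, (∀ n, P (L n)) ∧ (∀ n, L n <+: L (n + 1)) ∧
      (∀ n, n < (L (n + 1)).length) ∧ ∀ v ∈ C, ∃ n, v ∈ L n := by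
  obtain ⟨e, rfl⟩ := hC.exists_eq_range hne
  obtain ⟨L₀, hL₀⟩ := hP
  choose g hgP hg_pre hg_lt hg_mem using fun (L : {L // P L}) (n : ℕ) =>
    hext L L.2 (e n) (Set.mem_range_self n)
  let L : ℕ → {L // P L} := Nat.rec ⟨L₀, hL₀⟩ fun n K => ⟨g K n, hgP K n⟩
  refine ⟨Subtype.val ∘ L, fun n => (L n).2, fun n => hg_pre (L n) n, fun n => ?_, ?_⟩
  · induction n with
    | zero => exact (Nat.zero_le _).trans_lt (hg_lt (L 0) 0)
    | succ n ih => exact (Nat.succ_le_of_lt ih).trans_lt (hg_lt (L (n + 1)) (n + 1))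
  · rintro _ ⟨n, rfl⟩
    exact ⟨n + 1, hg_mem (L n) n⟩

theorem exists_injective_seq_of_extension {C : Set α} (hC : C.Countable) (hne : C.Nonempty)
    {P : List α → Prop} {R : α → α → Prop} (hP : ∃ L, P L) (hnodup : ∀ L, P L → L.Nodup)
    (hsub : ∀ L, P L → ∀ x ∈ L, x ∈ C) (hchain : ∀ L, P L → L.IsChain R)
    (hext : ∀ L, P L → ∀ v ∈ C, ∃ L', P L' ∧ L <+: L' ∧ L.length < L'.length ∧ v ∈ L') :
    ∃ f : ℕ → α, Function.Injective f ∧ Set.range f = C ∧ ∀ n, R (f n) (f (n + 1)) := by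
  obtain ⟨L, hPL, hpre, hlen, hcover⟩ := exists_prefix_chain_of_extension hC hne hP hext
  obtain ⟨f, hf⟩ := exists_forall_getElem_eq hpre hlen
  refine ⟨f, .of_lt_imp_ne fun m n hmn => ?_, Set.ext fun v => ⟨?_, fun hv => ?_⟩, fun n => ?_⟩
  · rw [← hf (n + 1) m (hmn.trans (hlen n)), ← hf (n + 1) n (hlen n)]
    exact fun h => hmn.ne ((hnodup _ (hPL _)).getElem_inj_iff.1 h)
  · rintro ⟨n, rfl⟩
    exact hf (n + 1) n (hlen n) ▸ hsub _ (hPL _) _ (List.getElem_mem _)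
  · obtain ⟨m, hm⟩ := hcover v hv
    obtain ⟨n, hn, rfl⟩ := List.getElem_of_mem hm
    exact ⟨n, (hf m n hn).symm⟩
  · rw [← hf (n + 2) n (Nat.lt_of_succ_lt (hlen (n + 1))), ← hf (n + 2) (n + 1) (hlen (n + 1))]
    exact List.isChain_iff_getElem.1 (hchain _ (hPL _)) n (hlen (n + 1))

end ListLimits

section BoundedSteps

variable {V : Type*} {G : SimpleGraph V}

theorem finite_ball (hlf : ∀ v, (G.neighborSet v).Finite) (c : V) (n : ℕ) :
    (G.ball c n).Finite := by
  induction n generalizing c with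
  | zero => simp
  | succ n ih =>
    refine (((hlf c).biUnion fun z _ => ih z).insert c).subset fun y hy => ?_
    rw [SimpleGraph.mem_ball, G.edist_comm] at hy
    obtain ⟨w, hw⟩ := SimpleGraph.exists_walk_of_edist_ne_top hy.ne_top
    cases w with
    | nil => exact .inl rfl
    | @cons _ z _ hcz w =>
      refine .inr (Set.mem_biUnion hcz ?_)
      rw [← hw, SimpleGraph.Walk.length_cons, Nat.cast_lt, Nat.succ_lt_succ_iff] at hy
      rw [SimpleGraph.mem_ball, G.edist_comm]
      exact w.edist_le.trans_lt (Nat.cast_lt.2 hy)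

theorem countable_of_connected (hG : G.Connected) (hlf : ∀ v, (G.neighborSet v).Finite) :
    Countable V := by
  obtain ⟨c⟩ := hG.nonempty
  refine Set.countable_univ_iff.1 <|
    (Set.countable_iUnion fun n : ℕ => (finite_ball hlf c n).countable).mono fun y _ => ?_
  obtain ⟨w, hw⟩ := hG.exists_walk_length_eq_edist y c
  exact Set.mem_iUnion.2 ⟨w.length + 1, hw.symm.trans_lt (Nat.cast_lt.2 w.length.lt_succ_self)⟩

/-- Consecutive values of the sequence `f` stay at bounded distance in `G`. The index type is `ℕ`
for rays and `ℤ` for lines. -/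
def HasBoundedSteps {ι : Type*} [Add ι] [One ι] (G : SimpleGraph V) (f : ι → V) : Prop :=
  ∃ K : ℕ, ∀ n, G.edist (f n) (f (n + 1)) ≤ K

theorem edist_add_natCast_le {ι : Type*} [AddMonoidWithOne ι] {f : ι → V} {K : ℕ}
    (hK : ∀ n, G.edist (f n) (f (n + 1)) ≤ K) (n : ι) (k : ℕ) :
    G.edist (f n) (f (n + k)) ≤ (k * K : ℕ) := by
  induction k with
  | zero => simp
  | succ k ih =>
    calc G.edist (f n) (f (n + (k + 1 : ℕ)))
        ≤ G.edist (f n) (f (n + k)) + G.edist (f (n + k)) (f (n + k + 1)) := by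
          rw [Nat.cast_succ, ← add_assoc]
          exact G.edist_triangle
      _ ≤ (k * K : ℕ) + K := add_le_add ih (hK _)
      _ = ((k + 1) * K : ℕ) := by rw [Nat.succ_mul, Nat.cast_add]

theorem HasBoundedSteps.comp_mul_add {f : ℕ → V} (hf : HasBoundedSteps G f) (a b : ℕ) :
    HasBoundedSteps G fun n => f (a * n + b) := by
  obtain ⟨K, hK⟩ := hf
  exact ⟨a * K, fun n => by
    simpa only [Nat.cast_id, mul_add_one, add_right_comm] using
      edist_add_natCast_le hK (a * n + b) a⟩

theorem exists_line_of_rays (hG : G.Connected) {f g : ℕ → V} (hf : Function.Injective f)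
    (hg : Function.Injective g) (hfg : IsCompl (Set.range f) (Set.range g))
    (hfs : HasBoundedSteps G f) (hgs : HasBoundedSteps G g) :
    ∃ φ : ℤ ≃ V, HasBoundedSteps G φ := by
  have hbij : Function.Bijective (Sum.elim f g) :=
    ⟨hf.sumElim hg fun a b hab => Set.disjoint_left.1 hfg.disjoint ⟨a, rfl⟩ ⟨b, hab.symm⟩,
      Set.range_eq_univ.1 <| (Set.Sum.elim_range f g).trans hfg.sup_eq_top⟩
  obtain ⟨K, hK⟩ := hfs
  obtain ⟨M, hM⟩ := hgs
  refine ⟨Equiv.intEquivNatSumNat.trans (.ofBijective _ hbij), K + M + G.dist (g 0) (f 0), ?_⟩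
  push_cast
  rw [(hG.preconnected _ _).coe_dist_eq_edist]
  rintro (n | _ | n)
  · exact (hK n).trans (le_add_right le_self_add)
  · exact le_add_self
  · exact G.edist_comm ▸ (hM n).trans (le_add_right le_add_self)

theorem exists_line_of_ray (hG : G.Connected) {f : ℕ → V} (hf : Function.Bijective f)
    (hfs : HasBoundedSteps G f) : ∃ φ : ℤ ≃ V, HasBoundedSteps G φ := by
  refine exists_line_of_rays (f := fun n => f (2 * n + 0)) (g := fun n => f (2 * n + 1)) hG
    (fun a b hab => ?_) (fun a b hab => ?_) ⟨?_, codisjoint_iff.2 ?_⟩ (hfs.comp_mul_add 2 0)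
    (hfs.comp_mul_add 2 1)
  · have := hf.injective hab; lia
  · have := hf.injective hab; lia
  · rw [Set.disjoint_left]
    rintro _ ⟨a, rfl⟩ ⟨b, hab⟩
    have := hf.injective hab; lia
  · refine Set.eq_univ_of_forall fun y => ?_
    obtain ⟨n, rfl⟩ := hf.surjective y
    obtain ⟨k, rfl | rfl⟩ := n.even_or_odd'
    exacts [.inl ⟨k, rfl⟩, .inr ⟨k, rfl⟩]

end BoundedSteps

section OneEnded

variable {V : Type*} {G : SimpleGraph V} {C W : Set V}

/-- `C` is an infinite connected set with finite edge boundary which no finite set of edges of `G`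
separates into two infinite parts. -/
structure IsOneEnded (G : SimpleGraph V) (C : Set V) : Prop where
  infinite : C.Infinite
  connected : (G.induce C).Connected
  finite_edgeBoundary : (edgeBoundary G C).Finite
  finite_or_finite_sdiff : ∀ X ⊆ C, (edgeBoundary G X).Finite → X.Finite ∨ (C \ X).Finite

theorem IsOneEnded.exists_sdiff_finite (hW : IsOneEnded G W) (hG : G.Connected)
    (hlf : ∀ v, (G.neighborSet v).Finite) {p v : V} (hp : p ∈ W) (hv : v ∈ W) :
    ∃ X ⊆ W, IsOneEnded G X ∧ (W \ X).Finite ∧ (G.induce (W \ X)).Connected ∧ p ∉ X ∧ v ∉ X ∧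
      ∃ s ∈ W \ X, ∃ q ∈ X, G.Adj s q := by
  obtain ⟨F, hFW, hF, hpF, hvF, hFconn⟩ := exists_finite_connected_subset hW.connected hp hv
  have hboundary : (edgeBoundary G (W \ F)).Finite :=
    (hW.finite_edgeBoundary.union (finite_edgeBoundary_of_finite hlf hF)).subset
      (edgeBoundary_sdiff_subset W F)
  obtain ⟨z, hz, hzinf⟩ := exists_infinite_componentIn hG (hW.infinite.sdiff hF) hboundary
  have hXF : componentIn G (W \ F) z ⊆ W \ F := componentIn_subset _ z
  have hXW : componentIn G (W \ F) z ⊆ W := hXF.trans Set.sdiff_subset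
  have hXboundary : (edgeBoundary G (componentIn G (W \ F) z)).Finite :=
    hboundary.subset (edgeBoundary_componentIn_subset _ z)
  obtain ⟨s, hs, q, hq, hsq⟩ := exists_adj_componentIn_sdiff hW.connected hFW ⟨p, hpF⟩ hz
  refine ⟨componentIn G (W \ F) z, hXW, ⟨hzinf, connected_induce_componentIn hz, hXboundary, ?_⟩,
    (hW.finite_or_finite_sdiff _ hXW hXboundary).resolve_left hzinf,
    connected_induce_sdiff_componentIn hW.connected hFW hFconn z, fun h => (hXF h).2 hpF,
    fun h => (hXF h).2 hvF, s, ⟨hFW hs, fun h => (hXF h).2 hs⟩, q, hq, hsq⟩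
  exact fun Y hY hYboundary => (hW.finite_or_finite_sdiff Y (hY.trans hXW) hYboundary).imp_right
    fun h => h.subset (Set.sdiff_subset_sdiff_left hXW)

/-- `L` is a Hamiltonian `3`-path on a part of `C` whose complement in `C` is still one-ended and
can be entered from the last vertex of `L` by a step of length at most `3`. -/
def IsInitialSegment (G : SimpleGraph V) (C : Set V) (L : List V) : Prop :=
  ∃ W ⊆ C, IsOneEnded G W ∧ IsHamiltonianThreePath G (C \ W) L ∧
    ∃ p ∈ W, ∀ x ∈ L.getLast?, G.edist x p ≤ 3

theorem IsOneEnded.isInitialSegment_nil (hC : IsOneEnded G C) : IsInitialSegment G C [] := by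
  obtain ⟨p, hp⟩ := hC.infinite.nonempty
  exact ⟨C, subset_rfl, hC, ⟨List.nodup_nil, by simp, .nil⟩, p, hp, by simp⟩

theorem IsInitialSegment.exists_extension (hG : G.Connected)
    (hlf : ∀ v, (G.neighborSet v).Finite) {L : List V} (hL : IsInitialSegment G C L) {v : V}
    (hv : v ∈ C) :
    ∃ L', IsInitialSegment G C L' ∧ L <+: L' ∧ L.length < L'.length ∧ v ∈ L' := by
  obtain ⟨W, hWC, hW, hLW, p, hp, hLp⟩ := hL
  obtain ⟨v', hv', hvL⟩ : ∃ v' ∈ W, v ∈ L ∨ v' = v := by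
    by_cases hvW : v ∈ W
    · exact ⟨v, hvW, .inr rfl⟩
    · exact ⟨p, hp, .inl ((hLW.mem_iff v).2 ⟨hv, hvW⟩)⟩
  obtain ⟨X, hXW, hX, hfin, hconn, hpX, hvX, s, hs, q, hq, hsq⟩ :=
    hW.exists_sdiff_finite hG hlf hp hv'
  obtain ⟨l, hl, hlp, t, hlt, hts⟩ := exists_isHamiltonianThreePath hfin hconn ⟨hp, hpX⟩ hs
  have hsq1 : G.edist s q ≤ 1 := (SimpleGraph.edist_eq_one_iff_adj.2 hsq).le
  have hjunction : ∀ x ∈ L.getLast?, ∀ y ∈ l.head?, G.edist x y ≤ 3 := fun x hx y hy =>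
    Option.mem_unique hlp hy ▸ hLp x hx
  refine ⟨L ++ l, ⟨X, hXW.trans hWC, hX, ?_, q, hq, fun x hx => ?_⟩, List.prefix_append L l, ?_, ?_⟩
  · rw [← Set.sdiff_union_sdiff_cancel hWC hXW]
    exact hLW.append hl (Set.disjoint_sdiff_left.mono_right Set.sdiff_subset) hjunction
  · obtain rfl := Option.mem_unique (List.mem_getLast?_append_of_mem_getLast? hlt) hx
    exact edist_le_three_of_le_one hts hsq1 (by simp)
  · rw [List.length_append, Nat.lt_add_right_iff_pos]
    exact List.length_pos_of_mem (List.mem_of_mem_head? hlp)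
  · refine List.mem_append.2 (hvL.imp_right ?_)
    rintro rfl
    exact (hl.mem_iff v').2 ⟨hv', hvX⟩

theorem IsOneEnded.exists_ray (hC : IsOneEnded G C) (hG : G.Connected)
    (hlf : ∀ v, (G.neighborSet v).Finite) :
    ∃ f : ℕ → V, Function.Injective f ∧ Set.range f = C ∧ HasBoundedSteps G f := by
  have := countable_of_connected hG hlf
  obtain ⟨f, hf, hrange, hsteps⟩ := exists_injective_seq_of_extension C.to_countable
    hC.infinite.nonempty ⟨[], hC.isInitialSegment_nil⟩
    (fun _ ⟨_, _, _, hL, _⟩ => hL.nodup) (fun _ ⟨_, _, _, hL, _⟩ x hx => ((hL.mem_iff x).1 hx).1)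
    (fun _ ⟨_, _, _, hL, _⟩ => hL.isChain) fun _ hL _ => hL.exists_extension hG hlf
  exact ⟨f, hf, hrange, 3, hsteps⟩

end OneEnded

section Ends

variable {V : Type*} {G : SimpleGraph V}

theorem mem_of_reachable_deleteEdges {A : Set (Sym2 V)} {X : Set V} (hA : edgeBoundary G X ⊆ A)
    {x y : V} (hxy : (G.deleteEdges A).Reachable x y) (hx : x ∈ X) : y ∈ X := by
  obtain ⟨w⟩ := hxy
  by_contra hy
  obtain ⟨d, -, hfst, hsnd⟩ := w.exists_boundary_dart X hx hy
  have hadj := (SimpleGraph.deleteEdges_adj ..).1 d.adj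
  exact hadj.2 (hA ⟨d.fst, hfst, d.snd, hsnd, hadj.1, rfl⟩)

theorem reachable_deleteEdges_of_mem_componentIn {A : Set (Sym2 V)} {Z : Set V}
    (hA : ∀ e ∈ A, ∃ v ∈ e, v ∉ Z) {x z : V} (hx : x ∈ componentIn G Z z) :
    (G.deleteEdges A).Reachable z x := by
  obtain ⟨w, hw⟩ := hx
  refine ⟨w.toDeleteEdges A fun e he heA => ?_⟩
  obtain ⟨v, hve, hvZ⟩ := hA e heA
  exact hvZ (hw v (w.mem_support_of_mem_edges he hve))

theorem card_le_of_graphEndsLE {m : ℕ} (h : graphEndsLE G m) (hG : G.Connected) {ι : Type*}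
    [Fintype ι] {X : ι → Set V} (hdisj : Pairwise (Function.onFun Disjoint X))
    (hinf : ∀ i, (X i).Infinite) (hfin : ∀ i, (edgeBoundary G (X i)).Finite) :
    Fintype.card ι ≤ m := by
  choose y hy hyinf using fun i => exists_infinite_componentIn hG (hinf i) (hfin i)
  have hA : (⋃ i, edgeBoundary G (X i)).Finite := Set.finite_iUnion hfin
  have hXA (i : ι) : edgeBoundary G (X i) ⊆ hA.toFinset := by
    rw [hA.coe_toFinset]
    exact Set.subset_iUnion (fun i => edgeBoundary G (X i)) i
  have hAX (i : ι) : ∀ e ∈ (hA.toFinset : Set (Sym2 V)), ∃ v ∈ e, v ∉ X i := by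
    intro e he
    obtain ⟨j, a, ha, b, hb, -, rfl⟩ := Set.mem_iUnion.1 (hA.coe_toFinset ▸ he)
    by_cases hij : i = j
    · exact ⟨b, Sym2.mem_mk_right a b, hij ▸ hb⟩
    · exact ⟨a, Sym2.mem_mk_left a b, Set.disjoint_right.1 (hdisj hij) ha⟩
  let c (i : ι) := (G.deleteEdges hA.toFinset).connectedComponentMk (y i)
  have hc_inj : Function.Injective c := fun i j hij => by
    by_contra hne
    exact Set.disjoint_left.1 (hdisj hne) (mem_of_reachable_deleteEdges (hXA i)
      (SimpleGraph.ConnectedComponent.exact hij) (hy i)) (hy j)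
  have hc_inf (i : ι) : (c i).supp.Infinite := (hyinf i).mono fun x hx =>
    SimpleGraph.ConnectedComponent.sound (reachable_deleteEdges_of_mem_componentIn (hAX i) hx).symm
  have hcard : (Set.range c).encard ≤ m :=
    (Set.encard_le_encard (Set.range_subset_iff.2 hc_inf)).trans (h hA.toFinset)
  simpa [← Set.image_univ, hc_inj.encard_image] using hcard

theorem isOneEnded_of_graphEndsLE_two (h : graphEndsLE G 2) (hG : G.Connected) {C : Set V}
    (hinf : C.Infinite) (hinf' : Cᶜ.Infinite) (hconn : (G.induce C).Connected)
    (hfin : (edgeBoundary G C).Finite) : IsOneEnded G C := by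
  refine ⟨hinf, hconn, hfin, fun X hX hXfin => ?_⟩
  by_contra! hcon
  have hthree : Fintype.card (Fin 3) ≤ 2 :=
    card_le_of_graphEndsLE h hG (X := ![X, C \ X, Cᶜ]) ?_ ?_ ?_
  · simp at hthree
  · have h₁ : Disjoint X (C \ X) := Set.disjoint_sdiff_right
    have h₂ : Disjoint X Cᶜ := Set.disjoint_compl_right_iff_subset.2 hX
    have h₃ : Disjoint (C \ X) Cᶜ := Set.disjoint_compl_right_iff_subset.2 Set.sdiff_subset
    simp [Pairwise, Function.onFun, Fin.forall_fin_succ, h₁, h₂, h₃, h₁.symm, h₂.symm, h₃.symm]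
  · simpa [Fin.forall_fin_succ] using ⟨hcon.1, hcon.2, hinf'⟩
  · simpa [Fin.forall_fin_succ, edgeBoundary_compl] using
      ⟨hXfin, (hfin.union hXfin).subset (edgeBoundary_sdiff_subset C X), hfin⟩

theorem exists_connected_infinite_compl (hG : G.Connected) {X : Set V} (hX : X.Infinite)
    (hX' : Xᶜ.Infinite) (hfin : (edgeBoundary G X).Finite) :
    ∃ C : Set V, C.Infinite ∧ Cᶜ.Infinite ∧ (G.induce C).Connected ∧ (G.induce Cᶜ).Connected ∧
      (edgeBoundary G C).Finite := by
  obtain ⟨x, hx, hxinf⟩ := exists_infinite_componentIn hG hX hfin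
  let D := componentIn G X x
  have hDfin : (edgeBoundary G Dᶜ).Finite :=
    edgeBoundary_compl D ▸ hfin.subset (edgeBoundary_componentIn_subset X x)
  have hD' : Dᶜ.Infinite := hX'.mono (Set.compl_subset_compl.2 (componentIn_subset X x))
  obtain ⟨z, hz, hzinf⟩ := exists_infinite_componentIn hG hD' hDfin
  refine ⟨componentIn G Dᶜ z, hzinf, hxinf.mono ?_, connected_induce_componentIn hz, ?_,
    hDfin.subset (edgeBoundary_componentIn_subset Dᶜ z)⟩
  · exact Set.subset_compl_comm.1 (componentIn_subset Dᶜ z)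
  · rw [Set.compl_eq_univ_sdiff, Set.compl_eq_univ_sdiff]
    exact connected_induce_sdiff_componentIn (connected_induce_univ.2 hG) (Set.subset_univ D)
      (connected_induce_componentIn hx) z

theorem exists_line_of_graphEndsLE_two [Infinite V] (h : graphEndsLE G 2) (hG : G.Connected)
    (hlf : ∀ v, (G.neighborSet v).Finite) : ∃ φ : ℤ ≃ V, HasBoundedSteps G φ := by
  by_cases hsplit : ∃ X : Set V, X.Infinite ∧ Xᶜ.Infinite ∧ (edgeBoundary G X).Finite
  · obtain ⟨X, hX, hX', hXfin⟩ := hsplit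
    obtain ⟨C, hC, hC', hconn, hconn', hfin⟩ := exists_connected_infinite_compl hG hX hX' hXfin
    obtain ⟨f, hf, hfC, hfs⟩ :=
      (isOneEnded_of_graphEndsLE_two h hG hC hC' hconn hfin).exists_ray hG hlf
    obtain ⟨g, hg, hgC, hgs⟩ := (isOneEnded_of_graphEndsLE_two h hG hC' (by rwa [compl_compl])
      hconn' (by rwa [edgeBoundary_compl])).exists_ray hG hlf
    exact exists_line_of_rays hG hf hg (hfC ▸ hgC ▸ isCompl_compl) hfs hgs
  · have huniv : IsOneEnded G Set.univ :=
      ⟨Set.infinite_univ, connected_induce_univ.2 hG, by simp [edgeBoundary_univ],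
        fun X _ hX => by
          by_contra! hcon
          exact hsplit ⟨X, hcon.1, Set.compl_eq_univ_sdiff X ▸ hcon.2, hX⟩⟩
    obtain ⟨f, hf, hrange, hfs⟩ := huniv.exists_ray hG hlf
    exact exists_line_of_ray hG ⟨hf, Set.range_eq_univ.1 hrange⟩ hfs

theorem exists_forall_ge_eq_of_finite_ne {α : Type*} {c : ℤ → α}
    (hc : {n | c n ≠ c (n + 1)}.Finite) : ∃ b, ∀ n ≥ b, c n = c b := by
  obtain ⟨b, hb⟩ := hc.bddAbove
  refine ⟨b + 1, fun n hn => ?_⟩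
  induction n, hn using Int.leInduction with
  | base => rfl
  | succ n hn ih =>
    by_contra hne
    exact absurd (hb (show n ∈ {n | c n ≠ c (n + 1)} from fun h => hne (h ▸ ih))) (by lia)

theorem encard_setOf_infinite_fiber_le_two {α : Type*} {c : ℤ → α}
    (hc : {n | c n ≠ c (n + 1)}.Finite) : {x | (c ⁻¹' {x}).Infinite}.encard ≤ 2 := by
  obtain ⟨b, hb⟩ := exists_forall_ge_eq_of_finite_ne hc
  obtain ⟨a, ha⟩ := exists_forall_ge_eq_of_finite_ne (c := fun n => c (-n)) <| by
    refine (hc.preimage (f := fun n => -(n + 1)) fun _ _ _ _ h => by simpa using h).subset ?_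
    intro n hn
    simpa using hn.symm
  have hpair : ({c b, c (-a)} : Set α).encard ≤ 2 :=
    (Set.encard_insert_le _ _).trans (by rw [Set.encard_singleton, one_add_one_eq_two])
  refine (Set.encard_le_encard fun x hx => ?_).trans hpair
  by_contra hne
  simp only [Set.mem_insert_iff, Set.mem_singleton_iff, not_or] at hne
  refine hx ((Set.finite_Ioo (-a) b).subset ?_)
  rintro n rfl
  constructor
  · by_contra! hn
    exact hne.2 (by simpa using ha (-n) (by lia))
  · by_contra! hn
    exact hne.1 (hb n hn)

theorem finite_setOf_not_reachable_deleteEdges (hlf : ∀ v, (G.neighborSet v).Finite)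
    {A : Set (Sym2 V)} (hA : A.Finite) (K : ℕ) :
    {x | ∃ y, G.edist x y ≤ K ∧ ¬ (G.deleteEdges A).Reachable x y}.Finite := by
  classical
  refine ((finite_setOf_exists_mem_sym2 hA).biUnion fun u _ =>
    finite_ball hlf u (K + 1)).subset ?_
  rintro x ⟨y, hxy, hnot⟩
  obtain ⟨w, hw⟩ := SimpleGraph.exists_walk_of_edist_ne_top (ne_top_of_le_ne_top (by simp) hxy)
  obtain ⟨e, hew, heA⟩ : ∃ e ∈ w.edges, e ∈ A := by
    by_contra! hwA
    exact hnot ⟨w.toDeleteEdges A hwA⟩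
  obtain ⟨u, hu⟩ : ∃ u, u ∈ e := ⟨_, e.out_fst_mem⟩
  have huw : u ∈ w.support := w.mem_support_of_mem_edges hew hu
  refine Set.mem_biUnion ⟨e, heA, hu⟩ ?_
  calc G.edist x u ≤ (w.takeUntil u huw).length := SimpleGraph.Walk.edist_le _
    _ ≤ w.length := Nat.cast_le.2 (w.length_takeUntil_le_length huw)
    _ ≤ K := hw.trans_le hxy
    _ < (K + 1 : ℕ) := Nat.cast_lt.2 K.lt_succ_self

theorem graphEndsLE_two_of_line (hlf : ∀ v, (G.neighborSet v).Finite) {φ : ℤ ≃ V}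
    (hφ : HasBoundedSteps G φ) : graphEndsLE G 2 := by
  intro A
  obtain ⟨K, hK⟩ := hφ
  let c (n : ℤ) := (G.deleteEdges A).connectedComponentMk (φ n)
  have hc : {n | c n ≠ c (n + 1)}.Finite :=
    ((finite_setOf_not_reachable_deleteEdges hlf A.finite_toSet K).preimage
      φ.injective.injOn).subset fun n hn =>
        ⟨φ (n + 1), hK n, fun h => hn (SimpleGraph.ConnectedComponent.sound h)⟩
  refine (Set.encard_le_encard fun x hx => ?_).trans (encard_setOf_infinite_fiber_le_two hc)
  exact Set.Infinite.preimage (s := x.supp) hx fun v _ => φ.surjective v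

end Ends

section Actions

variable {H X : Type*} [Group H]

theorem RightAction.bijective_act {a : RightAction H X} (htrans : a.IsTransitive)
    (hfree : ∀ x h, a.act x h = x → h = 1) (x : X) : Function.Bijective (a.act x) := by
  refine ⟨fun h k hhk => ?_, htrans x⟩
  refine (mul_inv_eq_one.1 (hfree x (k * h⁻¹) ?_)).symm
  rw [← a.act_mul, ← hhk, a.act_mul, mul_inv_cancel, a.act_one]

/-- The right regular action of `H`, transported to `X` along a bijection. -/
def RightAction.ofEquiv_s6 (φ : H ≃ X) : RightAction H X where
  act x h := φ (φ.symm x * h)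
  act_one := by simp
  act_mul := by simp [mul_assoc]

theorem RightAction.isTransitive_ofEquiv_s6 (φ : H ≃ X) : (RightAction.ofEquiv_s6 φ).IsTransitive :=
  fun x y => ⟨(φ.symm x)⁻¹ * φ.symm y, by simp [RightAction.ofEquiv_s6]⟩

theorem RightAction.isTranslationLike_ofEquiv {φ : H ≃ X} {d : X → X → ℝ}
    (hd : ∀ h, ∃ C, ∀ k, d (φ k) (φ (k * h)) ≤ C) :
    (RightAction.ofEquiv_s6 φ).IsTranslationLike d := by
  refine ⟨fun x h hxh => ?_, fun h => ?_⟩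
  · simpa [RightAction.ofEquiv_s6, ← φ.eq_symm_apply] using hxh
  · obtain ⟨C, hC⟩ := hd h
    exact ⟨C, fun x => by simpa [RightAction.ofEquiv_s6] using hC (φ.symm x)⟩

variable {V : Type*} {G : SimpleGraph V}

theorem graphDist_le_natCast_iff (hG : G.Connected) {u v : V} {n : ℕ} :
    graphDist G u v ≤ n ↔ G.edist u v ≤ n := by
  rw [graphDist, Nat.cast_le, ← (hG.preconnected u v).coe_dist_eq_edist, Nat.cast_le]

theorem HasBoundedSteps.exists_edist_add_le {φ : ℤ → V} (hφ : HasBoundedSteps G φ) (k : ℤ) :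
    ∃ K : ℕ, ∀ n, G.edist (φ n) (φ (n + k)) ≤ K := by
  obtain ⟨K, hK⟩ := hφ
  obtain ⟨m, rfl | rfl⟩ := k.eq_nat_or_neg
  · exact ⟨m * K, fun n => edist_add_natCast_le hK n m⟩
  · refine ⟨m * K, fun n => ?_⟩
    rw [G.edist_comm]
    simpa using edist_add_natCast_le hK (n + -m) m

theorem exists_transitive_isTranslationLike_iff_exists_line (hG : G.Connected) :
    (∃ a : RightAction (Multiplicative ℤ) V, a.IsTransitive ∧
      a.IsTranslationLike (graphDist G)) ↔ ∃ φ : ℤ ≃ V, HasBoundedSteps G φ := by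
  constructor
  · rintro ⟨a, htrans, hfree, hbdd⟩
    obtain ⟨x⟩ := hG.nonempty
    obtain ⟨C, hC⟩ := hbdd (.ofAdd 1)
    refine ⟨Multiplicative.ofAdd.trans (.ofBijective _ (a.bijective_act htrans hfree x)), ⌈C⌉₊,
      fun n => (graphDist_le_natCast_iff hG).1 ?_⟩
    simpa [a.act_mul] using (hC (a.act x (.ofAdd n))).trans (Nat.le_ceil C)
  · rintro ⟨φ, hφ⟩
    refine ⟨.ofEquiv (Multiplicative.toAdd.trans φ), RightAction.isTransitive_ofEquiv_s6 _,
      RightAction.isTranslationLike_ofEquiv fun h => ?_⟩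
    obtain ⟨K, hK⟩ := hφ.exists_edist_add_le h.toAdd
    exact ⟨K, fun k => (graphDist_le_natCast_iff hG).2 (hK k.toAdd)⟩

end Actions

theorem transitive_Z_action_iff_at_most_two_ends_general {V : Type*} (Γ : SimpleGraph V)
    [Infinite V] (hconn : Γ.Connected) (hlf : ∀ v : V, (Γ.neighborSet v).Finite) :
    (∃ a : RightAction (Multiplicative ℤ) V, a.IsTransitive ∧
       a.IsTranslationLike (graphDist Γ)) ↔
    graphEndsLE Γ 2 := by
  rw [exists_transitive_isTranslationLike_iff_exists_line hconn]
  exact ⟨fun ⟨_, hφ⟩ => graphEndsLE_two_of_line hlf hφ,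
    fun h => exists_line_of_graphEndsLE_two h hconn hlf⟩

/-- A connected infinite graph of uniformly bounded degree admits a transitive
translation-like action by `ℤ` if and only if it has at most two ends. -/
theorem transitive_Z_action_iff_at_most_two_ends {V : Type*} (Γ : SimpleGraph V)
    [Infinite V] (hconn : Γ.Connected) (D : ℕ)
    (hdeg : ∀ v : V, (Γ.neighborSet v).encard ≤ D) :
    (∃ a : RightAction (Multiplicative ℤ) V, a.IsTransitive ∧
       a.IsTranslationLike (graphDist Γ)) ↔
    graphEndsLE Γ 2 :=
  transitive_Z_action_iff_at_most_two_ends_general Γ hconn fun v =>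
    Set.finite_of_encard_le_coe (hdeg v)
end
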